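/- For every natural number c₁ and every real c₂ with 0 < c₂ ≤ 1, there exists a real constant C such that the following holds: every finite simple graph G on n ≥ 2 vertices with m edges in which all but at most c₁ of the vertices have degree at least c₂ · n admits a graphic parity network of size at most m + C · n · ln n. -/

import Mathlib

/-- Apply a CNOT gate `g = (control, target)` to a state `t : V → Finset V`:
the target wire receives the symmetric difference of the control and target terms,
all other wires are unchanged. -/
def applyGate {V : Type*} [DecidableEq V] (g : V × V) (t : V → Finset V) : V → Finset V :=
  fun w => if w = g.2 then symmDiff (t g.1) (t g.2) else t w

/-- Run a circuit (a list of CNOT gates) from the initial state `term v = {v}`. -/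
def runCircuit {V : Type*} [DecidableEq V] (C : List (V × V)) : V → Finset V :=
  C.foldl (fun t g => applyGate g t) (fun v => {v})

/-- `C` is a graphic parity network for the graph `G`:
every gate has distinct control and target, every edge `{u, v}` of `G` appears as the
term of some wire after some prefix of the circuit, and the final state is the initial
state. Its size is `C.length`. -/
def IsGPN {V : Type*} [DecidableEq V] (G : SimpleGraph V) (C : List (V × V)) : Prop :=
  (∀ g ∈ C, g.1 ≠ g.2) ∧
  (∀ u v : V, G.Adj u v → ∃ (k : ℕ) (w : V), runCircuit (C.take k) w = {u, v}) ∧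
  (∀ v : V, runCircuit C v = {v})

open Finset

section circuit
variable {V : Type*} [DecidableEq V]

def Can (t t' : V → Finset V) (S : Set (Finset V)) (N : ℕ) : Prop :=
  ∃ C : List (V × V), (∀ g ∈ C, g.1 ≠ g.2) ∧ C.foldl (fun t g => applyGate g t) t = t' ∧
    C.length ≤ N ∧
    ∀ s ∈ S, ∃ (k : ℕ) (w : V), (C.take k).foldl (fun t g => applyGate g t) t w = s

lemma Can.refl (t : V → Finset V) : Can t t ∅ 0 :=
  ⟨[], by simp, by simp, by simp, by simp⟩

lemma Can.trans {t t' t'' : V → Finset V} {S S' : Set (Finset V)} {N N' : ℕ}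
    (h : Can t t' S N) (h' : Can t' t'' S' N') : Can t t'' (S ∪ S') (N + N') := by
  obtain ⟨C, h1, h2, h3, h4⟩ := h
  obtain ⟨D, g1, g2, g3, g4⟩ := h'
  refine ⟨C ++ D, ?_, ?_, ?_, ?_⟩
  · intro g hg
    rcases List.mem_append.1 hg with hg | hg
    · exact h1 g hg
    · exact g1 g hg
  · rw [List.foldl_append, h2, g2]
  · rw [List.length_append]; omega
  · rintro s (hs | hs)
    · obtain ⟨k, w, hk⟩ := h4 s hs
      refine ⟨min k C.length, w, ?_⟩
      rw [List.take_append_of_le_length (by omega)]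
      rw [← hk]
      rcases le_total k C.length with h | h
      · rw [min_eq_left h]
      · rw [min_eq_right h, List.take_of_length_le h, List.take_of_length_le le_rfl]
    · obtain ⟨k, w, hk⟩ := g4 s hs
      refine ⟨C.length + k, w, ?_⟩
      rw [List.take_length_add_append, List.foldl_append, h2, hk]

lemma Can.mono {t t' : V → Finset V} {S S' : Set (Finset V)} {N N' : ℕ}
    (h : Can t t' S N) (hS : S' ⊆ S) (hN : N ≤ N') : Can t t' S' N' := by
  obtain ⟨C, h1, h2, h3, h4⟩ := h
  exact ⟨C, h1, h2, h3.trans hN, fun s hs => h4 s (hS hs)⟩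

lemma Can.gate (t : V → Finset V) {i j : V} (h : i ≠ j) :
    Can t (applyGate (i, j) t) {symmDiff (t i) (t j)} 1 := by
  refine ⟨[(i, j)], by simpa using h, by simp, by simp, ?_⟩
  intro s hs
  refine ⟨1, j, ?_⟩
  simp only [Set.mem_singleton_iff] at hs
  simp [applyGate, hs]

lemma Can.par (t : V → Finset V) (i : V) (A : Finset V) (hi : i ∉ A) :
    Can t (fun w => if w ∈ A then symmDiff (t i) (t w) else t w)
      {s | ∃ w ∈ A, s = symmDiff (t i) (t w)} A.card := by
  induction A using Finset.induction_on with
  | empty => simpa using Can.refl t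
  | insert a A ha ih =>
    simp only [Finset.mem_insert, not_or] at hi
    have h1 := (ih hi.2).trans (Can.gate _ hi.1)
    rw [Finset.card_insert_of_notMem ha]
    have e : (applyGate (i, a) fun w => if w ∈ A then symmDiff (t i) (t w) else t w) =
        (fun w => if w ∈ insert a A then symmDiff (t i) (t w) else t w) := by
      funext w
      by_cases hw : w = a
      · subst hw; simp [applyGate, ha, hi.2]
      · simp [applyGate, hw]
    rw [e] at h1
    refine h1.mono ?_ le_rfl
    rintro s ⟨w, hw, rfl⟩
    rcases Finset.mem_insert.1 hw with rfl | hw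
    · right; simp [ha, hi.2]
    · left; exact ⟨w, hw, rfl⟩

/-- state given by a pointer function -/
def stt (p : V → V) : V → Finset V := fun v => {v, p v}

/-- move all of `A` to point to `c` -/
def mv (p : V → V) (A : Finset V) (c : V) : V → V := fun v => if v ∈ A then c else p v

def out (A : Finset V) (c : V) : Set (Finset V) := {s | ∃ w ∈ A, s = {w, c}}

lemma out_union (A B : Finset V) (c : V) : out (A ∪ B) c = out A c ∪ out B c := by
  ext s; simp only [out, Finset.mem_union, Set.mem_ofPred_eq, Set.mem_union]
  grind

lemma mv_mv (p : V → V) (A B : Finset V) (c : V) : mv (mv p A c) B c = mv p (A ∪ B) c := by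
  funext v; simp only [mv, Finset.mem_union]; grind

lemma move_none (p : V → V) (A : Finset V) (c : V) (hc : p c = c) (hcA : c ∉ A)
    (hA : ∀ v ∈ A, p v = v) : Can (stt p) (stt (mv p A c)) (out A c) A.card := by
  have h := Can.par (stt p) c A hcA
  have e : ∀ w ∈ A, symmDiff (stt p c) (stt p w) = {w, c} := by
    intro w hw
    have : w ≠ c := fun h => hcA (h ▸ hw)
    ext x
    simp only [stt, hc, hA w hw, Finset.mem_symmDiff, Finset.mem_insert, Finset.mem_singleton]
    grind
  have e2 : (fun w => if w ∈ A then symmDiff (stt p c) (stt p w) else stt p w)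
      = stt (mv p A c) := by
    funext w
    by_cases hw : w ∈ A
    · rw [if_pos hw, e w hw]; simp [stt, mv, hw]
    · simp [stt, mv, hw]
  rw [e2] at h
  refine h.mono ?_ le_rfl
  rintro s ⟨w, hw, rfl⟩
  exact ⟨w, hw, (e w hw).symm⟩

lemma move_one (p : V → V) (A : Finset V) (c j : V) (hc : p c = c) (hj : p j = j) (hjc : j ≠ c)
    (hcA : c ∉ A) (hjA : j ∉ A)
    (hA : ∀ v ∈ A, p v = j) : Can (stt p) (stt (mv p A c)) (out A c) (A.card + 2) := by
  have h1 := Can.gate (stt p) (i := c) (j := j) hjc.symm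
  have h2 := h1.trans (Can.par _ j A hjA)
  have h3 := h2.trans (Can.gate _ (i := c) (j := j) hjc.symm)
  have ej : applyGate (c, j) (stt p) j = {j, c} := by
    ext x
    simp only [applyGate, if_true, stt, hc, hj, Finset.mem_symmDiff, Finset.mem_insert,
      Finset.mem_singleton]
    grind
  have eo : ∀ w, w ≠ j → applyGate (c, j) (stt p) w = stt p w := by
    intro w hw; simp [applyGate, hw]
  have e : ∀ w ∈ A, symmDiff (applyGate (c, j) (stt p) j) (applyGate (c, j) (stt p) w) = {w, c} := by
    intro w hw
    have h1 : w ≠ c := fun h => hcA (h ▸ hw)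
    have h2 : w ≠ j := fun h => hjA (h ▸ hw)
    rw [ej, eo w h2]
    ext x
    simp only [stt, hA w hw, Finset.mem_symmDiff, Finset.mem_insert, Finset.mem_singleton]
    grind
  have e2 : applyGate (c, j) (fun w => if w ∈ A then symmDiff (applyGate (c, j) (stt p) j)
      (applyGate (c, j) (stt p) w) else applyGate (c, j) (stt p) w) = stt (mv p A c) := by
    funext w
    by_cases hwj : w = j
    · subst hwj
      have : stt (mv p A c) w = {w} := by simp [stt, mv, hjA, hj]
      rw [this]
      have h0 : applyGate (c, w) (stt p) c = {c} := by rw [eo c hjc.symm]; simp [stt, hc]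
      simp only [applyGate, if_true, hcA, hjA, if_false]
      have h0' := h0
      have ej' := ej
      simp only [applyGate, if_true] at h0' ej'
      rw [h0', ej']
      ext x
      simp only [Finset.mem_symmDiff, Finset.mem_insert, Finset.mem_singleton]
      grind
    · rw [applyGate, if_neg hwj]
      by_cases hw : w ∈ A
      · rw [if_pos hw, e w hw]; simp [stt, mv, hw]
      · rw [if_neg hw, eo w hwj]; simp [stt, mv, hw]
  rw [e2] at h3
  refine h3.mono ?_ (by omega)
  rintro s ⟨w, hw, rfl⟩
  left; right
  exact ⟨w, hw, (e w hw).symm⟩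

lemma move_near (p : V → V) (N : Finset V) (c : V) (J : Finset V) (hc : p c = c)
    (hJ : ∀ j ∈ J, p j = j ∧ j ≠ c ∧ j ∉ N) (hcN : c ∉ N) :
    Can (stt p) (stt (mv p (N.filter (fun v => p v ∈ J)) c)) (out (N.filter (fun v => p v ∈ J)) c)
      ((N.filter (fun v => p v ∈ J)).card + 2 * J.card) := by
  induction J using Finset.induction_on with
  | empty =>
    have : mv p ∅ c = p := by funext v; simp [mv]
    simp only [Finset.notMem_empty, Finset.filter_false, this]
    exact (Can.refl _).mono (by simp [out]) (by simp)
  | insert a J ha ih =>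
    have ih := ih (fun j hj => hJ j (Finset.mem_insert_of_mem hj))
    obtain ⟨a1, a2, a3⟩ := hJ a (Finset.mem_insert_self _ _)
    have h := move_one (mv p (N.filter (fun v => p v ∈ J)) c) (N.filter (fun v => p v = a)) c a
      (by simp [mv, hcN, hc]) (by simp [mv, a3, a1]) a2 (by simp [hcN]) (by simp [a3])
      (by intro v hv; simp only [Finset.mem_filter] at hv; simp [mv, hv.2, ha])
    have h2 := ih.trans h
    rw [mv_mv, ← out_union] at h2
    have e : (N.filter (fun v => p v ∈ J)) ∪ (N.filter (fun v => p v = a)) =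
        N.filter (fun v => p v ∈ insert a J) := by
      ext v; simp only [Finset.mem_union, Finset.mem_filter, Finset.mem_insert]; tauto
    have e' : (N.filter (fun v => p v ∈ insert a J)).card =
        (N.filter (fun v => p v ∈ J)).card + (N.filter (fun v => p v = a)).card := by
      rw [← e, Finset.card_union_of_disjoint]
      rw [Finset.disjoint_left]
      intro v hv hv'
      simp only [Finset.mem_filter] at hv hv'
      exact ha (hv'.2 ▸ hv.2)
    rw [e] at h2
    refine h2.mono subset_rfl ?_
    rw [e', Finset.card_insert_of_notMem ha]; omega

lemma move_far (p : V → V) (B : Finset V) (c : V) (hc : p c = c) (hcB : c ∉ B)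
    (hB : ∀ v ∈ B, p v ≠ v ∧ p v ≠ c ∧ p v ∉ B ∧ p (p v) = p v) :
    Can (stt p) (stt (mv p B c)) (out B c) (2 * B.card) := by
  induction B using Finset.induction_on with
  | empty =>
    have : mv p ∅ c = p := by funext v; simp [mv]
    simp only [this]
    exact (Can.refl _).mono (by simp [out]) (by simp)
  | insert a B ha ih =>
    simp only [Finset.mem_insert, not_or] at hcB
    have ih := ih hcB.2 (fun j hj => by
      have := hB j (Finset.mem_insert_of_mem hj)
      simp only [Finset.mem_insert, not_or] at this; tauto)
    obtain ⟨a1, a2, a3, a4⟩ := hB a (Finset.mem_insert_self _ _)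
    simp only [Finset.mem_insert, not_or] at a3
    have h := (ih.trans (Can.gate _ (i := p a) (j := a) a1)).trans
      (Can.gate _ (i := c) (j := a) hcB.1)
    have s1 : stt (mv p B c) (p a) = {p a} := by simp [stt, mv, a3.2, a4]
    have s2 : stt (mv p B c) a = {a, p a} := by simp [stt, mv, ha]
    have s3 : stt (mv p B c) c = {c} := by simp [stt, mv, hcB.2, hc]
    have s4 : applyGate (p a, a) (stt (mv p B c)) c = {c} := by
      simp [applyGate, hcB.1, s3]
    have s5 : applyGate (p a, a) (stt (mv p B c)) a = {a} := by
      simp only [applyGate, if_true, s1, s2]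
      ext x
      simp only [Finset.mem_symmDiff, Finset.mem_insert, Finset.mem_singleton]
      grind
    have s6 : symmDiff ({c} : Finset V) {a} = {a, c} := by
      have := hcB.1
      ext x
      simp only [Finset.mem_symmDiff, Finset.mem_insert, Finset.mem_singleton]
      grind
    have e : applyGate (c, a) (applyGate (p a, a) (stt (mv p B c))) =
        stt (mv p (insert a B) c) := by
      funext w
      by_cases hw : w = a
      · subst hw
        rw [applyGate, if_pos rfl]
        simp only [s4, s5, s6]
        simp [stt, mv]
      · rw [applyGate, if_neg hw, applyGate, if_neg hw]
        simp [stt, mv, hw]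
    rw [e, s4, s5, s6] at h
    refine h.mono ?_ ?_
    · rintro s ⟨w, hw, rfl⟩
      rcases Finset.mem_insert.1 hw with rfl | hw
      · right; rfl
      · left; left; exact ⟨w, hw, rfl⟩
    · rw [Finset.card_insert_of_notMem ha]; omega

lemma move_all (p : V → V) (N : Finset V) (c : V) (J B : Finset V) (hc : p c = c)
    (hJ : ∀ j ∈ J, p j = j ∧ j ≠ c ∧ j ∉ N) (hcN : c ∉ N)
    (hN : ∀ v ∈ N, p v ≠ v → p v ≠ c ∧ p v ∉ N ∧ p (p v) = p v)
    (hB : ∀ v ∈ N, p v ≠ v → p v ∉ J → v ∈ B) :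
    Can (stt p) (stt (mv p N c)) (out N c) (N.card + 2 * J.card + B.card) := by
  set N0 := N.filter (fun v => p v = v) with hN0
  set N1 := N.filter (fun v => p v ∈ J) with hN1
  set N2 := N.filter (fun v => p v ≠ v ∧ p v ∉ J) with hN2
  have eN : N1 ∪ N0 ∪ N2 = N := by
    ext v; simp only [hN0, hN1, hN2, Finset.mem_union, Finset.mem_filter]; tauto
  have d1 : Disjoint N1 N0 := by
    rw [Finset.disjoint_left]
    intro v hv hv'
    simp only [hN0, hN1, Finset.mem_filter] at hv hv'
    exact (hJ _ hv.2).2.2 (hv'.2.symm ▸ hv.1)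
  have d2 : Disjoint (N1 ∪ N0) N2 := by
    rw [Finset.disjoint_left]
    intro v hv hv'
    simp only [hN0, hN1, hN2, Finset.mem_filter, Finset.mem_union] at hv hv'
    tauto
  have hcard : N.card = N1.card + N0.card + N2.card := by
    rw [← Finset.card_union_of_disjoint d1, ← Finset.card_union_of_disjoint d2, eN]
  have hB2 : N2.card ≤ B.card := by
    apply Finset.card_le_card
    intro v hv
    simp only [hN2, Finset.mem_filter] at hv
    exact hB v hv.1 hv.2.1 hv.2.2
  have h1 := move_near p N c J hc hJ hcN
  rw [← hN1] at h1
  have sub0 : N0 ⊆ N := Finset.filter_subset _ _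
  have sub1 : N1 ⊆ N := Finset.filter_subset _ _
  have sub2 : N2 ⊆ N := Finset.filter_subset _ _
  have h2 := move_none (mv p N1 c) N0 c (by simp [mv, hc]) (fun h => hcN (sub0 h)) (by
    intro v hv
    have : v ∉ N1 := fun h => Finset.disjoint_left.1 d1 h hv
    simp only [mv, this, if_false]
    simp only [hN0, Finset.mem_filter] at hv; exact hv.2)
  rw [mv_mv] at h2
  have h3 := move_far (mv p (N1 ∪ N0) c) N2 c (by simp [mv, hc]) (fun h => hcN (sub2 h)) (by
    intro v hv
    have : v ∉ N1 ∪ N0 := fun h => Finset.disjoint_left.1 d2 h hv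
    have e : mv p (N1 ∪ N0) c v = p v := by simp only [mv, this, if_false]
    rw [e]
    simp only [hN2, Finset.mem_filter] at hv
    obtain ⟨b1, b2, b3⟩ := hN v hv.1 hv.2.1
    refine ⟨hv.2.1, b1, fun h => b2 (sub2 (by simpa [hN2] using h)), ?_⟩
    have : p v ∉ N1 ∪ N0 := fun h => b2 (Finset.union_subset sub1 sub0 h)
    simp only [mv, this, if_false, b3])
  rw [mv_mv, eN] at h3
  have h := (h1.trans h2).trans h3
  rw [← out_union, ← out_union, eN] at h
  exact h.mono subset_rfl (by omega)

end circuit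

section sweep
open Classical

lemma stt_update {V : Type*} [DecidableEq V] (p : V → V) (c : V) (h : p c = c ∨ p (p c) = p c) :
    Can (stt p) (stt (Function.update p c c)) ∅ 1 := by
  by_cases hc : p c = c
  · have : Function.update p c c = p := by
      funext v; by_cases hv : v = c
      · subst hv; simp [hc]
      · simp [hv]
    rw [this]; exact (Can.refl _).mono (by simp) (by simp)
  · have h' := h.resolve_left hc
    have g := Can.gate (stt p) (i := p c) (j := c) hc
    have e : applyGate (p c, c) (stt p) = stt (Function.update p c c) := by
      funext w
      by_cases hw : w = c
      · subst hw
        simp only [applyGate, if_true, stt, h', Function.update_self]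
        ext x
        simp only [Finset.mem_symmDiff, Finset.mem_insert, Finset.mem_singleton]
        grind
      · simp [applyGate, stt, hw]
    rw [e] at g
    exact g.mono (by simp) le_rfl

variable {n : ℕ} (G : SimpleGraph (Fin n)) (f : Fin n → ℕ) (r : Fin n → ℕ)

noncomputable def NN (c : Fin n) : Finset (Fin n) := univ.filter (fun v => r c < r v ∧ G.Adj c v)
noncomputable def JJ (c : Fin n) : Finset (Fin n) := univ.filter (fun j => f j = f c ∨ f j = f c - 1)
noncomputable def BB (c : Fin n) : Finset (Fin n) :=
  univ.filter (fun v => ∀ u, G.Adj v u → f u ≠ f c - 1)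

structure SweepInv (k : ℕ) (p : Fin n → Fin n) : Prop where
  done : ∀ v, r v < k → p v = v
  ptr : ∀ v, p v = v ∨ r (p v) < k
  last : ∀ v, p v ≠ v → ∀ u, r u < k → G.Adj v u → r u ≤ r (p v)

lemma sweep (σ : Equiv.Perm (Fin n)) (hr : ∀ v, r v = (σ.symm v : ℕ))
    (hf : ∀ u v, r u ≤ r v → f u ≤ f v) (k : ℕ) (hk : k ≤ n) :
    ∃ p, SweepInv G r k p ∧ Can (stt id) (stt p)
      {s | ∃ c v, r c < k ∧ r c < r v ∧ G.Adj c v ∧ s = {v, c}}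
      (∑ c ∈ univ.filter (fun c => r c < k),
        ((NN G r c).card + 2 * (JJ f c).card + (BB G f c).card + 1)) := by
  have rinj : ∀ u v, r u = r v → u = v := by
    intro u v h
    rw [hr, hr] at h
    exact σ.symm.injective (Fin.ext h)
  induction k with
  | zero =>
    refine ⟨id, ⟨by simp, by simp, by simp⟩, (Can.refl _).mono ?_ (by simp)⟩
    rintro s ⟨c, v, h, -⟩; omega
  | succ k ih =>
    obtain ⟨p, hp, hC⟩ := ih (by omega)
    set c : Fin n := σ ⟨k, hk⟩ with hc
    have hrc : r c = k := by rw [hr, hc]; simp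
    have h1 := stt_update p c (by
      rcases hp.ptr c with h | h
      · exact Or.inl h
      · exact Or.inr (hp.done _ h))
    set q := Function.update p c c with hq
    have qc : q c = c := by simp [hq]
    have qo : ∀ v, v ≠ c → q v = p v := by intro v hv; simp [hq, hv]
    have rne : ∀ v, r v ≠ k → v ≠ c := by rintro v hv rfl; exact hv hrc
    have qd : ∀ v, r v < k → q v = v := by
      intro v hv; rw [qo v (rne v (by omega))]; exact hp.done v hv
    have h2 := move_all q (NN G r c) c ((JJ f c).filter (fun j => r j < k)) (BB G f c) qc
      (by
        intro j hj
        have hj := (Finset.mem_filter.1 hj).2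
        refine ⟨qd j hj, rne j (by omega), ?_⟩
        simp only [NN, Finset.mem_filter]; omega)
      (by simp [NN])
      (by
        intro v hv hne
        have hv' : r c < r v := by simp only [NN, Finset.mem_filter] at hv; tauto
        have e := qo v (rne v (by omega))
        rw [e] at hne ⊢
        have h := (hp.ptr v).resolve_left hne
        refine ⟨rne _ (by omega), ?_, qd _ h⟩
        simp only [NN, Finset.mem_filter]; omega)
      (by
        intro v hv hne hJ
        have hv' : r c < r v := by simp only [NN, Finset.mem_filter] at hv; tauto
        have e := qo v (rne v (by omega))
        rw [e] at hne hJ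
        have h := (hp.ptr v).resolve_left hne
        have l := hp.last v hne
        simp only [BB, Finset.mem_filter, Finset.mem_univ, true_and]
        intro u hu hfu
        simp only [JJ, Finset.mem_filter, Finset.mem_univ, true_and, not_and] at hJ
        have hJ' : ¬ (f (p v) = f c ∨ f (p v) = f c - 1) := fun hh => hJ hh h
        have b1 : f (p v) ≤ f c := hf _ _ (by omega)
        by_cases h0 : f c = 0
        · omega
        · have : r u < k := by
            by_contra hcon
            have := hf c u (by omega)
            omega
          have := hf _ _ (l u this hu)
          omega)
    refine ⟨mv q (NN G r c) c, ⟨?_, ?_, ?_⟩, ((hC.trans h1).trans h2).mono ?_ ?_⟩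
    · intro v hv
      have : v ∉ NN G r c := by simp only [NN, Finset.mem_filter]; omega
      simp only [mv, this, if_false]
      by_cases hvc : v = c
      · rw [hvc, qc]
      · exact qd v (by
          have : r v ≠ k := fun h => hvc (rinj _ _ (by omega))
          omega)
    · intro v
      by_cases hv : v ∈ NN G r c
      · right; simp only [mv, hv, if_true]; omega
      · simp only [mv, hv, if_false]
        by_cases hvc : v = c
        · left; rw [hvc, qc]
        · rw [qo v hvc]
          have := hp.ptr v
          rcases this with h | h
          · exact Or.inl h
          · right; omega
    · intro v hne u hu huv
      by_cases hv : v ∈ NN G r c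
      · simp only [mv, hv, if_true]; omega
      · simp only [mv, hv, if_false] at hne ⊢
        by_cases hvc : v = c
        · rw [hvc] at hne; exact absurd qc hne
        · rw [qo v hvc] at hne ⊢
          have hvk : ¬ r v < k := fun h => hne (hp.done v h)
          have hvk' : r v ≠ k := fun h => hvc (rinj _ _ (by omega))
          have : r u ≠ k := by
            intro h
            have : u = c := rinj _ _ (by omega)
            subst this
            apply hv
            simp only [NN, Finset.mem_filter, Finset.mem_univ, true_and]
            exact ⟨by omega, huv.symm⟩
          exact hp.last v hne u (by omega) huv
    · rintro s ⟨d, v, a1, a2, a3, rfl⟩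
      by_cases hd : r d < k
      · left; left; exact ⟨d, v, hd, a2, a3, rfl⟩
      · right
        have : d = c := rinj _ _ (by omega)
        subst this
        exact ⟨v, by simp only [NN, Finset.mem_filter, Finset.mem_univ, true_and]; exact ⟨a2, a3⟩, rfl⟩
    · have e : univ.filter (fun d => r d < k + 1) = insert c (univ.filter (fun d => r d < k)) := by
        ext d
        simp only [Finset.mem_filter, Finset.mem_univ, true_and, Finset.mem_insert]
        constructor
        · intro h
          by_cases hd : r d < k
          · exact Or.inr hd
          · exact Or.inl (rinj _ _ (by omega))
        · rintro (h | h)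
          · rw [h]; omega
          · omega
      rw [e, Finset.sum_insert (by simp [hrc])]
      have := Finset.card_filter_le (JJ f c) (fun j => r j < k)
      omega

lemma edges_sum : ∑ c, (NN G r c).card ≤ Nat.card G.edgeSet := by
  rw [← Finset.card_sigma, Nat.card_eq_fintype_card, ← SimpleGraph.edgeFinset_card]
  apply Finset.card_le_card_of_injOn (fun x => s(x.1, x.2))
  · rintro ⟨c, v⟩ h
    simp only [NN, Finset.coe_sigma, Set.mem_sigma_iff, Finset.mem_coe, Finset.mem_filter] at h
    simp only [Finset.mem_coe, SimpleGraph.mem_edgeFinset, SimpleGraph.mem_edgeSet]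
    exact h.2.2.2
  · rintro ⟨c, v⟩ h ⟨c', v'⟩ h' heq
    simp only [NN, Finset.coe_sigma, Set.mem_sigma_iff, Finset.mem_coe, Finset.mem_filter] at h h'
    simp only [Sym2.eq_iff] at heq
    rcases heq with ⟨rfl, rfl⟩ | ⟨rfl, rfl⟩
    · rfl
    · have := h.2.2.1; have := h'.2.2.1; omega

theorem network :
    ∃ C : List (Fin n × Fin n), IsGPN G C ∧
      C.length ≤ Nat.card G.edgeSet + ∑ c, (2 * (JJ f c).card + (BB G f c).card + 1) := by
  set σ := Tuple.sort f with hσ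
  have hm : Monotone (f ∘ σ) := Tuple.monotone_sort f
  let r : Fin n → ℕ := fun v => (σ.symm v : ℕ)
  have hinj : Function.Injective r := fun u v h => σ.symm.injective (Fin.ext h)
  obtain ⟨p, hp, C, h1, h2, h3, h4⟩ := sweep G f r σ (fun _ => rfl) (by
    intro u v h
    have := hm (a := σ.symm u) (b := σ.symm v) h
    simpa using this) n le_rfl
  have hid : stt (id : Fin n → Fin n) = fun v => {v} := by funext v; simp [stt]
  have hpid : p = id := by funext v; exact hp.done v (σ.symm v).2
  rw [hpid] at h2
  rw [hid] at h2 h4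
  refine ⟨C, ⟨h1, ?_, ?_⟩, ?_⟩
  · intro u v huv
    rcases lt_trichotomy (r u) (r v) with h | h | h
    · obtain ⟨k, w, hk⟩ := h4 {v, u} ⟨u, v, (σ.symm u).2, h, huv, rfl⟩
      exact ⟨k, w, by rw [Finset.pair_comm]; exact hk⟩
    · exact absurd (hinj h) huv.ne
    · exact h4 {u, v} ⟨v, u, (σ.symm v).2, h, huv.symm, rfl⟩
  · intro v
    exact congrFun h2 v
  · have e : univ.filter (fun c => r c < n) = univ := by
      ext c; simp only [Finset.mem_filter, Finset.mem_univ, true_and, iff_true]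
      exact (σ.symm c).2
    rw [e] at h3
    have h5 := edges_sum G r
    simp only [add_assoc, Finset.sum_add_distrib] at h3 ⊢
    omega

end sweep

section prob
open Classical

lemma count_near {n T : ℕ} (c j : Fin n) (hcj : c ≠ j) (g : Fin T → Fin T) :
    (univ.filter (fun F : Fin n → Fin T => F j = g (F c))).card * T ≤ T ^ n := by
  have h : ((univ.filter (fun F : Fin n → Fin T => F j = g (F c))) ×ˢ
      (univ : Finset (Fin T))).card ≤ (univ : Finset (Fin n → Fin T)).card := by
    apply Finset.card_le_card_of_injOn (fun x => Function.update x.1 j x.2)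
    · intro x _; simp
    · rintro ⟨F, x⟩ hF ⟨F', x'⟩ hF' heq
      simp only [Finset.coe_product, Set.mem_prod, Finset.mem_coe, Finset.mem_filter,
        Finset.mem_univ, true_and, and_true] at hF hF'
      simp only at heq
      have hx : x = x' := by simpa using congrFun heq j
      have ho : ∀ w, w ≠ j → F w = F' w := by
        intro w hw; simpa [hw] using congrFun heq w
      have : F = F' := by
        funext w
        by_cases hw : w = j
        · subst hw; rw [hF, hF', ho c hcj]
        · exact ho w hw
      rw [hx, this]
  simpa [Finset.card_product] using h

lemma count_bad {n T : ℕ} (hT : 0 < T) (S : Finset (Fin n)) (t : Fin T) :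
    ((univ.filter (fun F : Fin n → Fin T => ∀ u ∈ S, F u ≠ t)).card : ℝ) =
      (1 - 1 / (T : ℝ)) ^ S.card * (T : ℝ) ^ n := by
  have e : univ.filter (fun F : Fin n → Fin T => ∀ u ∈ S, F u ≠ t) =
      Fintype.piFinset (fun u => if u ∈ S then univ.erase t else univ) := by
    ext F
    simp only [Finset.mem_filter, Finset.mem_univ, true_and, Fintype.mem_piFinset]
    apply forall_congr'
    intro u
    by_cases hu : u ∈ S <;> simp [hu]
  rw [e, Fintype.card_piFinset]
  have hT' : (T : ℝ) ≠ 0 := by positivity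
  have e2 : ∀ u : Fin n, (((if u ∈ S then univ.erase t else univ : Finset (Fin T)).card : ℕ) : ℝ) =
      (if u ∈ S then (1 - 1 / (T : ℝ)) else 1) * T := by
    intro u
    by_cases hu : u ∈ S
    · simp only [hu, if_true]
      rw [Finset.card_erase_of_mem (Finset.mem_univ _)]
      simp only [Finset.card_univ, Fintype.card_fin]
      rw [Nat.cast_sub hT]; field_simp; simp
    · simp [hu]
  push_cast
  rw [Finset.prod_congr rfl (fun u _ => e2 u), Finset.prod_mul_distrib]
  simp [Finset.prod_ite_mem]

lemma exists_coloring {n T : ℕ} (hT : 0 < T) (G : SimpleGraph (Fin n)) (A : Finset (Fin n)) (ε : ℝ) (hε : 0 ≤ ε)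
    (hA : ∀ v, v ∉ A → (1 - 1 / (T : ℝ)) ^ (univ.filter (fun u => G.Adj v u)).card ≤ ε) :
    ∃ f : Fin n → ℕ, ((∑ c, (2 * (JJ f c).card + (BB G f c).card) : ℕ) : ℝ) ≤
      2 * (n * (1 + n * (2 / T))) + n * (A.card + n * (T * ε)) := by
  have : Nonempty (Fin T) := ⟨⟨0, hT⟩⟩
  have hT0 : (0 : ℝ) < T := by exact_mod_cast hT
  have hn0 : (0 : ℝ) ≤ n := Nat.cast_nonneg n
  let π : Fin T → Fin T := fun t => ⟨t.1 - 1, by omega⟩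
  let fv : (Fin n → Fin T) → Fin n → ℕ := fun F v => (F v : ℕ)
  have hΩ : (0:ℝ) < (T:ℝ) ^ n := by positivity
  have key : ∀ c : Fin n, ∑ F : Fin n → Fin T, ((JJ (fv F) c).card : ℝ) ≤
      (T:ℝ) ^ n * (1 + n * (2 / T)) := by
    intro c
    have e : ∀ F : Fin n → Fin T, ((JJ (fv F) c).card : ℝ) ≤
        ∑ j, ((if j = c then 1 else 0) + (if j ≠ c ∧ F j = F c then (1:ℝ) else 0)
          + (if j ≠ c ∧ F j = π (F c) then 1 else 0)) := by
      intro F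
      rw [JJ, Finset.card_filter]
      push_cast
      apply Finset.sum_le_sum
      intro j _
      have i1 : fv F j = fv F c ↔ F j = F c := by simp [fv, Fin.ext_iff]
      have i2 : fv F j = fv F c - 1 ↔ F j = π (F c) := by simp [fv, π, Fin.ext_iff]
      simp only [i1, i2]
      by_cases h1 : j = c
      · subst h1; simp only [true_or, if_true]; simp
      · by_cases h2 : F j = F c <;> by_cases h3 : F j = π (F c) <;> simp_all
    refine (Finset.sum_le_sum (fun F _ => e F)).trans ?_
    rw [Finset.sum_comm]
    have b : ∀ (g : Fin T → Fin T) (j : Fin n),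
        ∑ F : Fin n → Fin T, (if j ≠ c ∧ F j = g (F c) then (1:ℝ) else 0) ≤ (T:ℝ) ^ n * (1 / T) := by
      intro g j
      by_cases hj : j = c
      · simp only [hj, ne_eq, not_true, false_and, if_false, Finset.sum_const_zero]; positivity
      · simp only [ne_eq, hj, not_false_iff, true_and]
        rw [Finset.sum_boole]
        have := count_near c j (Ne.symm hj) g
        rw [mul_one_div, le_div_iff₀ hT0]
        exact_mod_cast this
    have b2 : ∀ j : Fin n, ∑ F : Fin n → Fin T, ((if j = c then 1 else 0) + (if j ≠ c ∧ F j = F c then (1:ℝ) else 0)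
          + (if j ≠ c ∧ F j = π (F c) then 1 else 0)) ≤
          (T:ℝ) ^ n * (if j = c then 1 else 0) + (T:ℝ) ^ n * (2 / T) := by
      intro j
      rw [Finset.sum_add_distrib, Finset.sum_add_distrib]
      have b3 := b id j
      have b4 := b π j
      have : (T:ℝ) ^ n * (2 / T) = (T:ℝ) ^ n * (1 / T) + (T:ℝ) ^ n * (1 / T) := by ring
      simp only [id] at b3
      have b5 : ∑ F : Fin n → Fin T, (if j = c then (1:ℝ) else 0) =
        (T:ℝ) ^ n * (if j = c then 1 else 0) := by simp
      linarith
    refine (Finset.sum_le_sum (fun j _ => b2 j)).trans (le_of_eq ?_)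
    rw [Finset.sum_add_distrib, ← Finset.mul_sum]
    simp; ring
  have key2 : ∀ c : Fin n, ∑ F : Fin n → Fin T, ((BB G (fv F) c).card : ℝ) ≤
      (T:ℝ) ^ n * (A.card + n * (T * ε)) := by
    intro c
    have e : ∀ F : Fin n → Fin T, ((BB G (fv F) c).card : ℝ) ≤
        A.card + ∑ v, ∑ t : Fin T,
          (if v ∉ A ∧ ∀ u ∈ univ.filter (fun u => G.Adj v u), F u ≠ t then (1:ℝ) else 0) := by
      intro F
      have e1 : (A.card : ℝ) = ∑ v : Fin n, if v ∈ A then (1:ℝ) else 0 := by simp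
      rw [e1, ← Finset.sum_add_distrib, BB, Finset.card_filter]
      push_cast
      apply Finset.sum_le_sum
      intro v _
      have nn : ∀ t : Fin T, (0:ℝ) ≤
          (if v ∉ A ∧ ∀ u ∈ univ.filter (fun u => G.Adj v u), F u ≠ t then (1:ℝ) else 0) := by
        intro t; split_ifs <;> norm_num
      have nn2 := Finset.sum_nonneg (fun t (_ : t ∈ univ) => nn t)
      by_cases hv : v ∈ A
      · rw [if_pos hv]
        have : (if ∀ u, G.Adj v u → fv F u ≠ fv F c - 1 then (1:ℝ) else 0) ≤ 1 := by
          split_ifs <;> norm_num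
        linarith
      · rw [if_neg hv, zero_add]
        by_cases hh : ∀ u, G.Adj v u → fv F u ≠ fv F c - 1
        · rw [if_pos hh]
          refine le_trans ?_ (Finset.single_le_sum (fun t _ => nn t) (Finset.mem_univ (π (F c))))
          rw [if_pos]
          refine ⟨hv, fun u hu hFu => hh u (Finset.mem_filter.1 hu).2 ?_⟩
          simp [fv, hFu, π]
        · rw [if_neg hh]; exact nn2
    refine (Finset.sum_le_sum (fun F _ => e F)).trans ?_
    rw [Finset.sum_add_distrib, Finset.sum_comm]
    have b : ∀ v : Fin n, ∑ F : Fin n → Fin T, ∑ t : Fin T,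
          (if v ∉ A ∧ ∀ u ∈ univ.filter (fun u => G.Adj v u), F u ≠ t then (1:ℝ) else 0) ≤
          (T:ℝ) ^ n * (T * ε) := by
      intro v
      by_cases hv : v ∈ A
      · simp only [hv, not_true, false_and, if_false, Finset.sum_const_zero]; positivity
      rw [Finset.sum_comm]
      have : ∀ t : Fin T, ∑ F : Fin n → Fin T,
          (if v ∉ A ∧ ∀ u ∈ univ.filter (fun u => G.Adj v u), F u ≠ t then (1:ℝ) else 0) ≤
          (T:ℝ) ^ n * ε := by
        intro t
        simp only [hv, not_false_iff, true_and]
        rw [Finset.sum_boole, count_bad hT, mul_comm]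
        exact mul_le_mul_of_nonneg_left (hA v hv) hΩ.le
      refine (Finset.sum_le_sum (fun t _ => this t)).trans (le_of_eq ?_)
      simp; ring
    rw [add_comm]
    have h3 := Finset.sum_le_sum (fun v (_ : v ∈ (univ : Finset (Fin n))) => b v)
    have h4 : ∑ F : Fin n → Fin T, (A.card : ℝ) = (T:ℝ) ^ n * A.card := by simp
    have h5 : ∑ v : Fin n, (T:ℝ) ^ n * (T * ε) = (T:ℝ) ^ n * (n * (T * ε)) := by simp; ring
    rw [h5] at h3
    rw [h4]
    linarith
  obtain ⟨F, -, hF⟩ := Finset.exists_le_of_sum_le (s := (univ : Finset (Fin n → Fin T)))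
    (f := fun F => ∑ c, (2 * ((JJ (fv F) c).card : ℝ) + ((BB G (fv F) c).card : ℝ)))
    (g := fun _ => 2 * (n * (1 + n * (2 / T))) + n * (A.card + n * (T * ε)))
    Finset.univ_nonempty (by
      rw [Finset.sum_comm]
      have : ∀ c : Fin n, ∑ F : Fin n → Fin T,
          (2 * ((JJ (fv F) c).card : ℝ) + ((BB G (fv F) c).card : ℝ)) ≤
          2 * ((T:ℝ) ^ n * (1 + n * (2 / T))) + (T:ℝ) ^ n * (A.card + n * (T * ε)) := by
        intro c
        rw [Finset.sum_add_distrib, ← Finset.mul_sum]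
        linarith [key c, key2 c]
      refine (Finset.sum_le_sum (fun c _ => this c)).trans (le_of_eq ?_)
      simp only [Finset.sum_const, Finset.card_univ, Fintype.card_fin, nsmul_eq_mul,
        Fintype.card_fun]
      push_cast
      ring)
  refine ⟨fv F, ?_⟩
  push_cast
  exact hF

lemma param {n T : ℕ} (hn : 2 ≤ n) (c₂ x : ℝ) (hc₂ : 0 < c₂)
    (hx : x = c₂ * n / (6 * Real.log n)) (hT : T = ⌊x⌋₊ + 1) (d : ℕ) (hd : c₂ * n ≤ d) :
    (1 - 1 / (T : ℝ)) ^ d ≤ 1 / (n : ℝ) ^ 3 := by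
  have hn' : (2:ℝ) ≤ n := by exact_mod_cast hn
  have hL : 0 < Real.log n := Real.log_pos (by linarith)
  have hx0 : 0 < x := by rw [hx]; positivity
  by_cases h : x < 1
  · have : ⌊x⌋₊ = 0 := Nat.floor_eq_zero.2 h
    rw [this] at hT
    have hd0 : d ≠ 0 := by
      rintro rfl
      have : 0 < c₂ * n := by positivity
      simp at hd; linarith
    subst hT
    simp [hd0]
  · push Not at h
    have hTx : (T:ℝ) ≤ 2 * x := by
      rw [hT]; push_cast
      have := Nat.floor_le hx0.le
      linarith
    have hT0 : (0:ℝ) < T := by rw [hT]; positivity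
    have hT1 : (1:ℝ) ≤ T := by rw [hT]; push_cast; linarith [Nat.cast_nonneg (α := ℝ) ⌊x⌋₊]
    have h1 : 0 ≤ 1 - 1 / (T:ℝ) := by
      rw [sub_nonneg, div_le_one hT0]; exact hT1
    have h2 : 1 - 1 / (T:ℝ) ≤ Real.exp (-(1 / (T:ℝ))) := by
      have := Real.add_one_le_exp (-(1 / (T:ℝ))); linarith
    calc (1 - 1 / (T : ℝ)) ^ d ≤ Real.exp (-(1 / (T:ℝ))) ^ d := pow_le_pow_left₀ h1 h2 d
      _ = Real.exp (d * (-(1 / (T:ℝ)))) := by rw [Real.exp_nat_mul]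
      _ ≤ Real.exp (-(3 * Real.log n)) := by
        apply Real.exp_le_exp.2
        have : 3 * Real.log n ≤ d / T := by
          rw [le_div_iff₀ hT0]
          have : 3 * Real.log n * (2 * x) = c₂ * n := by rw [hx]; field_simp; norm_num
          have h6 : 3 * Real.log n * T ≤ 3 * Real.log n * (2 * x) :=
            mul_le_mul_of_nonneg_left hTx (by positivity)
          linarith
        have e : (d:ℝ) * (-(1 / (T:ℝ))) = -(d / T) := by ring
        rw [e]; linarith
      _ = 1 / (n : ℝ) ^ 3 := by
        rw [Real.exp_neg, one_div]
        congr 1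
        have : 3 * Real.log n = Real.log ((n:ℝ) ^ 3) := by rw [Real.log_pow]; norm_num
        rw [this, Real.exp_log (by positivity)]

end prob

/-- For every `c₁ : ℕ` and real `0 < c₂ ≤ 1` there is a constant `K` such that every
graph on `n ≥ 2` vertices with `m` edges in which all but at most `c₁` vertices have
degree at least `c₂ · n` admits a graphic parity network of size at most
`m + K · n · ln n`. -/
theorem stmt3 (c₁ : ℕ) (c₂ : ℝ) (hc₂ : 0 < c₂) (hc₂' : c₂ ≤ 1) :
    ∃ K : ℝ, ∀ n : ℕ, 2 ≤ n → ∀ G : SimpleGraph (Fin n),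
      Nat.card {v : Fin n | (Nat.card (G.neighborSet v) : ℝ) < c₂ * n} ≤ c₁ →
      ∃ C : List (Fin n × Fin n), IsGPN G C ∧
        (C.length : ℝ) ≤ (Nat.card G.edgeSet : ℝ) + K * n * Real.log n := by
  classical
  refine ⟨2 * (4 + c₁) + 24 / c₂, ?_⟩
  intro n hn G hG
  have hn' : (2:ℝ) ≤ n := by exact_mod_cast hn
  have hn0 : (0:ℝ) < n := by linarith
  have hL2 : (1:ℝ) / 2 ≤ Real.log n := by
    have h1 := Real.log_two_gt_d9
    have h2 := Real.log_le_log (by norm_num) hn'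
    linarith
  have hL : 0 < Real.log n := by linarith
  obtain ⟨x, hx⟩ : ∃ x, x = c₂ * n / (6 * Real.log n) := ⟨_, rfl⟩
  obtain ⟨T, hT⟩ : ∃ T, T = ⌊x⌋₊ + 1 := ⟨_, rfl⟩
  have hx0 : 0 < x := by rw [hx]; positivity
  have hT0 : 0 < T := by omega
  have hT0' : (0:ℝ) < T := by exact_mod_cast hT0
  have hxT : x ≤ T := by rw [hT]; push_cast; exact (Nat.lt_floor_add_one x).le
  have hTx : (T:ℝ) ≤ x + 1 := by
    rw [hT]; push_cast; linarith [Nat.floor_le hx0.le]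
  set A : Finset (Fin n) :=
    Finset.univ.filter (fun v => (Nat.card (G.neighborSet v) : ℝ) < c₂ * n) with hA
  have hAc : A.card ≤ c₁ := by
    refine le_trans (le_of_eq ?_) hG
    rw [Nat.card_eq_fintype_card]
    simp only [hA]
    exact (Fintype.card_subtype _).symm
  obtain ⟨f, hf⟩ := exists_coloring hT0 G A (1 / (n:ℝ) ^ 3) (by positivity) (by
    intro v hv
    apply param hn c₂ x hc₂ hx hT
    simp only [hA, Finset.mem_filter, Finset.mem_univ, true_and, not_lt] at hv
    refine hv.trans (le_of_eq ?_)
    congr 1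
    rw [Nat.card_eq_fintype_card]
    exact Fintype.card_subtype _)
  obtain ⟨C, hC, hlen⟩ := network G f
  refine ⟨C, hC, ?_⟩
  have hlen' : (C.length : ℝ) ≤ (Nat.card G.edgeSet : ℝ) +
      (((∑ c, (2 * (JJ f c).card + (BB G f c).card) : ℕ) : ℝ) + n) := by
    rw [Finset.sum_add_distrib] at hlen
    simp only [Finset.sum_const, Finset.card_univ, Fintype.card_fin, smul_eq_mul, mul_one] at hlen
    exact_mod_cast hlen
  have h1 : (n:ℝ) * (2 / T) ≤ 12 * Real.log n / c₂ := by
    have : (n:ℝ) * (2 / T) ≤ n * (2 / x) := by gcongr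
    refine this.trans (le_of_eq ?_)
    rw [hx]; field_simp; norm_num
  have h2 : (n:ℝ) * ((A.card : ℝ) + n * (T * (1 / (n:ℝ) ^ 3))) ≤ n * c₁ + 2 := by
    have e : (n:ℝ) * ((A.card : ℝ) + n * (T * (1 / (n:ℝ) ^ 3))) = n * A.card + T / n := by
      field_simp
    have h3 : (T:ℝ) / n ≤ 2 := by
      rw [div_le_iff₀ hn0]
      have : x ≤ n := by
        rw [hx, div_le_iff₀ (by positivity)]
        nlinarith
      linarith
    have h4 : (n:ℝ) * A.card ≤ n * c₁ := by
      have : (A.card : ℝ) ≤ c₁ := by exact_mod_cast hAc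
      gcongr
    rw [e]; linarith
  have h3 : (n:ℝ) * (1 + n * (2 / T)) ≤ n * (1 + 12 * Real.log n / c₂) := by gcongr
  have h5 : (n:ℝ) ≤ 2 * (n * Real.log n) := by nlinarith
  have h6 : (n:ℝ) * c₁ ≤ 2 * (n * Real.log n) * c₁ := by gcongr
  have e : (2 * (4 + c₁) + 24 / c₂) * n * Real.log n =
      4 * (2 * (n * Real.log n)) + 2 * (n * Real.log n) * c₁ +
      2 * (n * (12 * Real.log n / c₂)) := by ring
  rw [e]
  have e2 : (n:ℝ) * (1 + 12 * Real.log n / c₂) = n + n * (12 * Real.log n / c₂) := by ring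
  linarith
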